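/- Let n ≥ 4, n − ⌊n/3⌋ ≤ r ≤ n−1, 1 ≤ p ≤ n−2, and p+1 ≤ q ≤ p+r−2 ≤ n−1. Then PORD(n,r) \ F^r_{p,q} is a maximal subsemigroup of PORD(n,r). -/

import Mathlib

/-!
Partial transformations on the chain X_n = {1 < 2 < ... < n}, encoded as
functions `ℕ → Option ℕ` (with `none` meaning "undefined"), composed
left-to-right: `x(αβ) = (xα)β`.
-/

namespace OrientedPT

noncomputable section
open scoped Classical

/-- A partial transformation, as a partial map on `ℕ`. -/
def PTrans : Type := ℕ → Option ℕ

instance : Mul PTrans := ⟨fun f g x => (f x).bind g⟩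

theorem mul_apply (f g : PTrans) (x : ℕ) : (f * g) x = (f x).bind g := rfl

instance : Semigroup PTrans where
  mul_assoc f g h := by
    funext x
    show ((f x).bind g).bind h = (f x).bind (fun y => (g y).bind h)
    cases f x <;> rfl

/-- The domain of a partial transformation. -/
def domSet (f : PTrans) : Set ℕ := {x | f x ≠ none}

/-- The image of a partial transformation. -/
def im (f : PTrans) : Set ℕ := {y | ∃ x, f x = some y}

/-- The set of fixed points: `fix(α) = {x ∈ dom α : xα = x}`. -/
def fixSet (f : PTrans) : Set ℕ := {x | f x = some x}

/-- The value of `f` at `x` (defaulting to `0` off the domain). -/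
def val (f : PTrans) (x : ℕ) : ℕ := (f x).getD 0

/-- `f` is a partial transformation on `X_n = {1,…,n}`. -/
def IsPT (n : ℕ) (f : PTrans) : Prop :=
  domSet f ⊆ Set.Icc 1 n ∧ im f ⊆ Set.Icc 1 n

/-- Order-decreasing: `xα ≤ x` for all `x ∈ dom α`. -/
def OrderDecr (f : PTrans) : Prop := ∀ x y, f x = some y → y ≤ x

/-- Order-preserving. -/
def OrderPres (f : PTrans) : Prop :=
  ∀ x y u v, f x = some u → f y = some v → x ≤ y → u ≤ v

/-- Order-reversing. -/
def OrderRev (f : PTrans) : Prop :=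
  ∀ x y u v, f x = some u → f y = some v → x ≤ y → v ≤ u

/-- Monotone: order-preserving or order-reversing. -/
def IsMonotone (f : PTrans) : Prop := OrderPres f ∨ OrderRev f

/-- Injectivity of a partial transformation. -/
def Inj (f : PTrans) : Prop := ∀ x y z, f x = some z → f y = some z → x = y

/-- The cyclic successor of `a` in the set `D`: the least element of `D`
above `a` if there is one, and otherwise the least element of `D`. -/
def cycSucc (D : Set ℕ) (a : ℕ) : ℕ :=
  if {x ∈ D | a < x}.Nonempty then sInf {x ∈ D | a < x} else sInf D

/-- The cyclic descents of `f`: those `a ∈ dom f` whose cyclic successor in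
`dom f` has a strictly smaller value. Writing `dom f = {x₁ < ⋯ < x_t}` these
are exactly the indices `1 ≤ i ≤ t` with `x_{i+1}α < x_iα` (where `x_{t+1} = x₁`). -/
def descents (f : PTrans) : Set ℕ :=
  {a ∈ domSet f | val f (cycSucc (domSet f) a) < val f a}

/-- The cyclic ascents of `f`. -/
def ascents (f : PTrans) : Set ℕ :=
  {a ∈ domSet f | val f a < val f (cycSucc (domSet f) a)}

/-- Orientation-preserving: at most one cyclic descent. -/
def OrientPres (f : PTrans) : Prop := (descents f).ncard ≤ 1

/-- Orientation-reversing: at most one cyclic ascent. -/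
def OrientRev (f : PTrans) : Prop := (ascents f).ncard ≤ 1

/-- Oriented: orientation-preserving or orientation-reversing. -/
def Oriented (f : PTrans) : Prop := OrientPres f ∨ OrientRev f

/-- `PORD n`: all oriented and order-decreasing partial transformations on `X_n`. -/
def PORD (n : ℕ) : Set PTrans := {f | IsPT n f ∧ Oriented f ∧ OrderDecr f}

/-- `PORD(n,r) = {α ∈ PORD_n : |im α| ≤ r}`. -/
def PORDr (n r : ℕ) : Set PTrans := {f ∈ PORD n | (im f).ncard ≤ r}

/-- `POPD n`: the orientation-preserving elements of `PORD n`. -/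
def POPD (n : ℕ) : Set PTrans := {f ∈ PORD n | OrientPres f}

/-- `PORD_n^* = PORD_n \ POPD_n`. -/
def PORDstar (n : ℕ) : Set PTrans := PORD n \ POPD n

/-- `PMD n`: monotone and order-decreasing partial transformations on `X_n`. -/
def PMD (n : ℕ) : Set PTrans := {f | IsPT n f ∧ IsMonotone f ∧ OrderDecr f}

/-- `PRD_n^* = PORD_n^* \ PMD_n`. -/
def PRDstar (n : ℕ) : Set PTrans := PORDstar n \ PMD n

/-- `IORD n`: the injective elements of `PORD n`. -/
def IORD (n : ℕ) : Set PTrans := {f ∈ PORD n | Inj f}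

/-- `IORD(n,r) = {α ∈ IORD_n : |im α| ≤ r}`. -/
def IORDr (n r : ℕ) : Set PTrans := {f ∈ IORD n | (im f).ncard ≤ r}

/-- `A` is a generating set of `S`: `A ⊆ S` and the smallest subsemigroup
containing `A` is `S`. -/
def IsGenSet (S A : Set PTrans) : Prop :=
  A ⊆ S ∧ (Subsemigroup.closure A : Set PTrans) = S

/-- A minimal generating set: a generating set of minimum cardinality. -/
def IsMinGenSet (S A : Set PTrans) : Prop :=
  IsGenSet S A ∧ ∀ B : Set PTrans, IsGenSet S B → A.ncard ≤ B.ncard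

/-- The rank of `S`: the minimum cardinality of a generating set of `S`. -/
def rank (S : Set PTrans) : ℕ :=
  sInf {k | ∃ A : Set PTrans, IsGenSet S A ∧ A.ncard = k}

/-- `z` is undecomposable in `S`: `z = xy` with `x, y ∈ S` forces `z = x` or `z = y`. -/
def Undecomposable (S : Set PTrans) (z : PTrans) : Prop :=
  ∀ x ∈ S, ∀ y ∈ S, z = x * y → z = x ∨ z = y

/-- `T` is a subsemigroup of (the semigroup given by the subset) `S`. -/
def IsSubsemigroupOf (T S : Set PTrans) : Prop :=
  T ⊆ S ∧ ∀ a ∈ T, ∀ b ∈ T, a * b ∈ T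

/-- `T` is a maximal subsemigroup of `S`: a maximal element, under inclusion,
of the family of proper subsemigroups of `S`. -/
def IsMaximalSubsemigroup (S T : Set PTrans) : Prop :=
  IsSubsemigroupOf T S ∧ T ≠ S ∧
    ∀ U : Set PTrans, IsSubsemigroupOf U S → U ≠ S → T ⊆ U → T = U

/-- The restriction of `f` to `Y`. -/
def restrict (f : PTrans) (Y : Set ℕ) : PTrans :=
  fun x => if x ∈ Y then f x else none

/-- The partial identity `1_Y` on `Y`. -/
def partialId (Y : Set ℕ) : PTrans := fun x => if x ∈ Y then some x else none

/-- `ξ_{p,q}`: domain `[p, q+1]`, fixes every point of `[p,q]`, maps `q+1` to `p`. -/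
def xi (p q : ℕ) : PTrans := fun x =>
  if p ≤ x ∧ x ≤ q then some x else if x = q + 1 then some p else none

/-- `γ_{p,q}` (for `1 ≤ p ≤ q−2 ≤ n−2`): with `k = min(p−1, q−p−1)` and
`l = min(q−p−1, n−q)`, it has domain `[p, p+k] ∪ [q, q+l]` and maps
`p+i ↦ p−i` and `q+j ↦ q−j`. -/
def gamma (n p q : ℕ) : PTrans := fun x =>
  if p ≤ x ∧ x ≤ p + min (p - 1) (q - p - 1) then some (2 * p - x)
  else if q ≤ x ∧ x ≤ q + min (q - p - 1) (n - q) then some (2 * q - x)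
  else none

/-- `γ_{p,q}^{r,s}`: with `u = min(r−s, q−p, n−q+1)`, it has domain
`[p, p+s−1] ∪ [q, q+u−1]` and maps `p+i ↦ p−i` and `q+j ↦ q−j`. -/
def gammaRS (n r p q s : ℕ) : PTrans := fun x =>
  if p ≤ x ∧ x + 1 ≤ p + s then some (2 * p - x)
  else if q ≤ x ∧ x + 1 ≤ q + min (r - s) (min (q - p) (n - q + 1)) then some (2 * q - x)
  else none

/-- `δ^a_Y`: domain `Y ∪ {a}`, fixes every point of `Y`, maps `a` to `a−1`. -/
def deltaMap (a : ℕ) (Y : Set ℕ) : PTrans :=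
  fun x => if x ∈ Y then some x else if x = a then some (a - 1) else none

/-- `ζ_Z`: with `a = max Z` and `b = min Z`, domain `Z ∪ {a+1}`, fixes every
point of `Z`, maps `a+1` to `b−1`. -/
def zetaMap (Z : Set ℕ) : PTrans :=
  fun x => if x ∈ Z then some x else if x = sSup Z + 1 then some (sInf Z - 1) else none

/-- `E_r`: the idempotents of `PORD_n` with image of size exactly `r`. -/
def Eset (n r : ℕ) : Set PTrans := {f ∈ PORD n | f * f = f ∧ (im f).ncard = r}

/-- `F_r = {ξ_{p,q}^r : 1 ≤ p ≤ n−2, p+1 ≤ q ≤ p+r−2 ≤ n−1}`. -/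
def Fset (n r : ℕ) : Set PTrans :=
  {f | ∃ p q : ℕ, 1 ≤ p ∧ p + 2 ≤ n ∧ p + 1 ≤ q ∧ q + 2 ≤ p + r ∧ p + r ≤ n + 1 ∧
    f = xi p q}

/-- `G_n = {γ_{p,q} : 1 ≤ p ≤ q−2 ≤ n−2} \ {γ_{1,n}}`. -/
def Gset (n : ℕ) : Set PTrans :=
  {f | ∃ p q : ℕ, 1 ≤ p ∧ p + 2 ≤ q ∧ q ≤ n ∧ f = gamma n p q} \ {gamma n 1 n}

/-- `H_n^r = {γ_{p,q}^{r,s} : 1 ≤ p ≤ q−2 ≤ n−2, 1 ≤ s ≤ min{p, q−p, r−1}, (q,s) ≠ (n,1)}`. -/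
def Hset (n r : ℕ) : Set PTrans :=
  {f | ∃ p q s : ℕ, 1 ≤ p ∧ p + 2 ≤ q ∧ q ≤ n ∧ 1 ≤ s ∧
    s ≤ min p (min (q - p) (r - 1)) ∧ ¬(q = n ∧ s = 1) ∧ f = gammaRS n r p q s}

/-- `EI_r = {1_Y : Y ⊆ X_n, |Y| = r}`. -/
def EIset (n r : ℕ) : Set PTrans :=
  {f | ∃ Y : Set ℕ, Y ⊆ Set.Icc 1 n ∧ Y.ncard = r ∧ f = partialId Y}

/-- `FI_r = {δ^a_Y : 2 ≤ a ≤ n, Y ⊆ X_n \ {a−1,a}, |Y| = r−1}`. -/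
def FIset (n r : ℕ) : Set PTrans :=
  {f | ∃ (a : ℕ) (Y : Set ℕ), 2 ≤ a ∧ a ≤ n ∧ Y ⊆ Set.Icc 1 n \ {a - 1, a} ∧
    Y.ncard = r - 1 ∧ f = deltaMap a Y}

/-- `GI_k = {ζ_Z : Z ⊆ X_n \ {1,n}, |Z| = k−1}`. -/
def GIset (n k : ℕ) : Set PTrans :=
  {f | ∃ Z : Set ℕ, Z ⊆ Set.Icc 1 n \ {1, n} ∧ Z.ncard = k - 1 ∧ f = zetaMap Z}

/-- `GI_k^c`: those `ζ_Z ∈ GI_k` with `Z` a convex subset (an interval). -/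
def GIcset (n k : ℕ) : Set PTrans :=
  {f | ∃ Z : Set ℕ, Z ⊆ Set.Icc 1 n \ {1, n} ∧ Z.ncard = k - 1 ∧ Z.OrdConnected ∧
    f = zetaMap Z}

/-- `F^r_{p,q} = {α ∈ PORD(n,r) : α restricted to [p, q+1] equals ξ_{p,q}^r}`. -/
def Frestr (n r p q : ℕ) : Set PTrans :=
  {f ∈ PORDr n r | restrict f (Set.Icc p (q + 1)) = xi p q}

/-- `G_{p,q} = {α ∈ PORD^*(n,r) : α restricted to dom(γ_{p,q}) equals γ_{p,q}}`. -/
def Grestr (n r p q : ℕ) : Set PTrans :=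
  {f ∈ PORDr n r ∩ PORDstar n | restrict f (domSet (gamma n p q)) = gamma n p q}

/-- `H^{r,s}_{p,q} = {α ∈ PORD^*(n,r) : α restricted to dom(γ^{r,s}_{p,q}) equals γ^{r,s}_{p,q}}`. -/
def Hrestr (n r p q s : ℕ) : Set PTrans :=
  {f ∈ PORDr n r ∩ PORDstar n |
    restrict f (domSet (gammaRS n r p q s)) = gammaRS n r p q s}

end

end OrientedPT

/-!
Unroll the cycle `X_n` to `ℤ`. A partial transformation is oriented exactly when it lifts to a
monotone or antitone map of `ℤ` that moves by `± n` whenever its argument moves by `n`. Such lifts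
compose, so `PORD(n,r)` is a semigroup.
A map in `F^r_{p,q}` already makes a full turn on `[p, q + 1]`, so it sends all other points of its
domain to `p`. Hence any two maps `f`, `g` in `F^r_{p,q}` satisfy `g = h f`, where `h` fixes
`[p, q + 1]` and collapses the rest of `dom g` to `q + 1`; such an `h` lies outside `F^r_{p,q}`.
Finally, if a product of two order-decreasing maps fixes a point then so does each factor, and this
forces one factor of a product in `F^r_{p,q}` to be in `F^r_{p,q}`.
-/

namespace OrientedPT

variable {n r p q m : ℕ} {ε δ : ℤˣ} {f g : PTrans} {S F : Set PTrans} {w z : ℕ → ℤ}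

/-! ### A criterion for maximality -/

theorem isMaximalSubsemigroup_sdiff (hS : ∀ a ∈ S, ∀ b ∈ S, a * b ∈ S) (hFS : F ⊆ S)
    (hF : F.Nonempty) (hprime : ∀ a ∈ S, ∀ b ∈ S, a * b ∈ F → a ∈ F ∨ b ∈ F)
    (hgen : ∀ f ∈ F, F ⊆ Subsemigroup.closure (insert f (S \ F))) :
    IsMaximalSubsemigroup S (S \ F) := by
  refine ⟨⟨Set.sdiff_subset, fun a ha b hb => ⟨hS a ha.1 b hb.1, fun hab => ?_⟩⟩, ?_, ?_⟩
  · exact (hprime a ha.1 b hb.1 hab).elim ha.2 hb.2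
  · obtain ⟨f, hf⟩ := hF
    intro heq
    exact (heq.symm.subset (hFS hf)).2 hf
  · rintro U ⟨hUS, hUmul⟩ hne hTU
    refine hTU.antisymm fun f hfU => ⟨hUS hfU, fun hfF => hne (hUS.antisymm fun g hgS => ?_)⟩
    let V : Subsemigroup PTrans := ⟨U, fun {a b} ha hb => hUmul a ha b hb⟩
    have hclosure : Subsemigroup.closure (insert f (S \ F)) ≤ V :=
      Subsemigroup.closure_le.2 (Set.insert_subset hfU hTU)
    by_cases hgF : g ∈ F
    · exact hclosure (hgen f hfF hgF)
    · exact hTU ⟨hgS, hgF⟩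

/-! ### Partial transformations and their products -/

theorem mem_domSet_of_eq_some {x u : ℕ} (h : f x = some u) : x ∈ domSet f := by
  simp [domSet, h]

theorem val_eq_of_eq_some {x u : ℕ} (h : f x = some u) : val f x = u := by
  simp [val, h]

theorem apply_eq_some_val {x : ℕ} (h : x ∈ domSet f) : f x = some (val f x) := by
  obtain ⟨u, hu⟩ := Option.ne_none_iff_exists'.1 h
  rw [hu, val_eq_of_eq_some hu]

theorem mul_eq_some_iff {x s : ℕ} : (f * g) x = some s ↔ ∃ u, f x = some u ∧ g u = some s :=
  Option.bind_eq_some_iff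

theorem mul_apply_of_eq_some {x u : ℕ} (h : f x = some u) : (f * g) x = g u := by
  rw [mul_apply, h]
  rfl

theorem domSet_mul_subset : domSet (f * g) ⊆ domSet f := by
  intro x hx
  obtain ⟨u, hu, -⟩ := mul_eq_some_iff.1 (apply_eq_some_val hx)
  exact mem_domSet_of_eq_some hu

theorem im_mul_subset : im (f * g) ⊆ im g := by
  rintro s ⟨x, hx⟩
  obtain ⟨u, -, hu⟩ := mul_eq_some_iff.1 hx
  exact ⟨u, hu⟩

theorem IsPT.mul (hf : IsPT n f) (hg : IsPT n g) : IsPT n (f * g) :=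
  ⟨domSet_mul_subset.trans hf.1, im_mul_subset.trans hg.2⟩

theorem OrderDecr.mul (hf : OrderDecr f) (hg : OrderDecr g) : OrderDecr (f * g) := by
  intro x s hx
  obtain ⟨u, hu, hs⟩ := mul_eq_some_iff.1 hx
  exact (hg u s hs).trans (hf x u hu)

theorem OrderDecr.fixes_of_mul_fixes (hf : OrderDecr f) (hg : OrderDecr g) {x : ℕ}
    (h : (f * g) x = some x) : f x = some x ∧ g x = some x := by
  obtain ⟨u, hu, hx⟩ := mul_eq_some_iff.1 h
  obtain rfl : u = x := (hf x u hu).antisymm (hg u x hx)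
  exact ⟨hu, hx⟩

theorem IsPT.mem_Icc {x u : ℕ} (hf : IsPT n f) (h : f x = some u) : x ∈ Set.Icc 1 n :=
  hf.1 (mem_domSet_of_eq_some h)

theorem IsPT.image_mem_Icc {x u : ℕ} (hf : IsPT n f) (h : f x = some u) : u ∈ Set.Icc 1 n :=
  hf.2 ⟨x, h⟩

theorem IsPT.sign_mul_lt_add {x y u v : ℕ} (hf : IsPT n f) (hx : f x = some u) (hy : f y = some v)
    (ε : ℤˣ) : (ε * u : ℤ) < ε * v + n := by
  obtain ⟨hu₁, hun⟩ := hf.image_mem_Icc hx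
  obtain ⟨hv₁, hvn⟩ := hf.image_mem_Icc hy
  rcases Int.units_eq_one_or ε with rfl | rfl <;> push_cast <;> omega

section CycSucc

variable {D : Set ℕ} {a b : ℕ}

theorem cycSucc_mem (ha : a ∈ D) : cycSucc D a ∈ D := by
  rw [cycSucc]
  split_ifs with h
  · exact (Nat.sInf_mem h).1
  · exact Nat.sInf_mem ⟨a, ha⟩

theorem lt_cycSucc (hb : b ∈ D) (hab : a < b) : a < cycSucc D a := by
  have h : {x ∈ D | a < x}.Nonempty := ⟨b, hb, hab⟩
  rw [cycSucc, if_pos h]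
  exact (Nat.sInf_mem h).2

theorem cycSucc_le (hb : b ∈ D) (hab : a < b) : cycSucc D a ≤ b := by
  rw [cycSucc, if_pos ⟨b, hb, hab⟩]
  exact Nat.sInf_le ⟨hb, hab⟩

theorem cycSucc_le_of_forall_le (ha : ∀ x ∈ D, x ≤ a) (hb : b ∈ D) : cycSucc D a ≤ b := by
  have h : ¬ {x ∈ D | a < x}.Nonempty := fun ⟨x, hx, hax⟩ => (ha x hx).not_gt hax
  rw [cycSucc, if_neg h]
  exact Nat.sInf_le hb

theorem monotoneOn_of_le_cycSucc {β : Type*} [Preorder β] {F : ℕ → β}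
    (h : ∀ a ∈ D, a < cycSucc D a → F a ≤ F (cycSucc D a)) : MonotoneOn F D := by
  intro x hx y hy hxy
  induction hk : y - x using Nat.strong_induction_on generalizing x with
  | _ k ih =>
    rcases hxy.eq_or_lt with rfl | hlt
    · exact le_rfl
    · have hxs := lt_cycSucc hy hlt
      exact (h x hx hxs).trans
        (ih _ (by omega) (cycSucc_mem hx) (cycSucc_le hy hlt) rfl)

/-- On the cycle of length `n`, the successor of `b` lies on the arc from `b` to a point `a < b`;
`k` is the number of turns completed when it is reached. -/
theorem exists_cycSucc_mem_arc (hD : D ⊆ Set.Icc 1 n) (ha : a ∈ D) (hb : b ∈ D) :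
    ∃ k : ℤ, (b : ℤ) ≤ cycSucc D b + n * k ∧ (cycSucc D b : ℤ) ≤ a + n * (1 - k) := by
  obtain ⟨-, hbn⟩ := hD hb
  by_cases hlast : ∀ c ∈ D, c ≤ b
  · have hsa : cycSucc D b ≤ a := cycSucc_le_of_forall_le hlast ha
    exact ⟨1, by omega, by omega⟩
  · push Not at hlast
    obtain ⟨c, hc, hbc⟩ := hlast
    have hbs : b < cycSucc D b := lt_cycSucc hc hbc
    obtain ⟨-, hsn⟩ := hD (cycSucc_mem hb)
    exact ⟨0, by omega, by omega⟩

end CycSucc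

/-! ### Winding functions -/

/-- `w` records the winding of a lift of `f` to the universal cover `ℤ` of the cycle of length `n`:
the map sending `x + n * k` to `ε * f x + n * (w x + k)`, for `x ∈ dom f`, is monotone. The sign
`ε` is `1` when `f` preserves the orientation and `-1` when it reverses it. -/
def IsWinding (n : ℕ) (ε : ℤˣ) (f : PTrans) (w : ℕ → ℤ) : Prop :=
  ∀ ⦃x y u v : ℕ⦄ ⦃k : ℤ⦄, f x = some u → f y = some v → (x : ℤ) ≤ y + n * k →
    (ε : ℤ) * u + n * w x ≤ (ε : ℤ) * v + n * (w y + k)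

theorem IsWinding.mul (hf : IsWinding n ε f w) (hg : IsWinding n δ g z) :
    IsWinding n (ε * δ) (f * g) fun x => w x + ε * z (val f x) := by
  intro x y s t k hx hy hxy
  obtain ⟨u, hu, hs⟩ := mul_eq_some_iff.1 hx
  obtain ⟨v, hv, ht⟩ := mul_eq_some_iff.1 hy
  have huv := hf hu hv hxy
  simp only [val_eq_of_eq_some hu, val_eq_of_eq_some hv]
  rcases Int.units_eq_one_or ε with rfl | rfl
  · have hst := hg hs ht (k := w y + k - w x) (by push_cast at huv; linarith)
    push_cast
    linarith
  · have hts := hg ht hs (k := w y + k - w x) (by push_cast at huv; linarith)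
    push_cast
    linarith

section Winding

variable {x y u v : ℕ} {k : ℤ}

theorem IsWinding.le (hw : IsWinding n ε f w) (hf : IsPT n f) (hx : f x = some u)
    (hy : f y = some v) (hxy : (x : ℤ) ≤ y + n * k) : w x ≤ w y + k := by
  have hlift := hw hx hy hxy
  have hvu := hf.sign_mul_lt_add hy hx ε
  have hmul : (n : ℤ) * w x < n * (w y + k + 1) := by linarith
  exact Int.lt_add_one_iff.1 (lt_of_mul_lt_mul_left hmul n.cast_nonneg)

theorem IsWinding.lt (hw : IsWinding n ε f w) (hx : f x = some u) (hy : f y = some v)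
    (hxy : (x : ℤ) ≤ y + n * k) (hvu : (ε * v : ℤ) < ε * u) : w x < w y + k := by
  have hlift := hw hx hy hxy
  have hmul : (n : ℤ) * w x < n * (w y + k) := by linarith
  exact lt_of_mul_lt_mul_left hmul n.cast_nonneg

end Winding

theorem IsPT.isWinding_of_lift_le (hf : IsPT n f)
    (hmono : ∀ x y u v, f x = some u → f y = some v → x ≤ y →
      (ε * u + n * w x : ℤ) ≤ ε * v + n * w y)
    (hturn : ∀ x y u v, f x = some u → f y = some v →
      (ε * u + n * w x : ℤ) ≤ ε * v + n * w y + n) : IsWinding n ε f w := by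
  intro x y u v k hx hy hxy
  obtain ⟨hx₁, -⟩ := hf.mem_Icc hx
  obtain ⟨-, hyn⟩ := hf.mem_Icc hy
  have hk : 0 ≤ k := by
    have hmul : (n : ℤ) * 0 < n * (k + 1) := by linarith [Int.ofNat_le.2 hx₁, Int.ofNat_le.2 hyn]
    exact Int.lt_add_one_iff.1 (lt_of_mul_lt_mul_left hmul n.cast_nonneg)
  rcases hk.eq_or_lt with rfl | hk
  · simpa using hmono x y u v hx hy (by simpa using hxy)
  · have hnk : (n : ℤ) * 1 ≤ n * k := mul_le_mul_of_nonneg_left hk n.cast_nonneg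
    linarith [hturn x y u v hx hy]

/-! ### Oriented maps are the maps with a winding function -/

/-- The cyclic descents of `ε * f`: for `ε = 1` these are the cyclic descents of `f`, and for
`ε = -1` its cyclic ascents. -/
def signedDescents (ε : ℤˣ) (f : PTrans) : Set ℕ :=
  {a ∈ domSet f | (ε * val f (cycSucc (domSet f) a) : ℤ) < ε * val f a}

theorem IsPT.oriented_iff_exists_subsingleton_signedDescents (hf : IsPT n f) :
    Oriented f ↔ ∃ ε : ℤˣ, (signedDescents ε f).Subsingleton := by
  have hfin (ε : ℤˣ) : (signedDescents ε f).Finite :=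
    ((Set.finite_Icc 1 n).subset hf.1).subset (Set.sep_subset _ _)
  have hdescents : signedDescents 1 f = descents f := by simp [signedDescents, descents]
  have hascents : signedDescents (-1) f = ascents f := by simp [signedDescents, ascents]
  have ncard_le_one_iff (ε : ℤˣ) :
      (signedDescents ε f).ncard ≤ 1 ↔ (signedDescents ε f).Subsingleton :=
    have := (hfin ε).to_subtype
    Set.ncard_le_one_iff_subsingleton
  rw [Oriented, OrientPres, OrientRev, ← hdescents, ← hascents, ncard_le_one_iff, ncard_le_one_iff]
  refine ⟨fun h => h.elim (⟨_, ·⟩) (⟨_, ·⟩), ?_⟩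
  rintro ⟨ε, hε⟩
  rcases Int.units_eq_one_or ε with rfl | rfl
  · exact Or.inl hε
  · exact Or.inr hε

theorem IsWinding.subsingleton_signedDescents (hw : IsWinding n ε f w) (hf : IsPT n f) :
    (signedDescents ε f).Subsingleton := by
  have hle : ∀ a ∈ signedDescents ε f, ∀ b ∈ signedDescents ε f, b ≤ a := by
    rintro a ⟨ha, hadesc⟩ b ⟨hb, hbdesc⟩
    by_contra! hab
    have hfa := apply_eq_some_val ha
    have hfb := apply_eq_some_val hb
    have hfsa := apply_eq_some_val (cycSucc_mem ha)
    have hfsb := apply_eq_some_val (cycSucc_mem hb)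
    have has := lt_cycSucc hb hab
    have hsb := cycSucc_le hb hab
    obtain ⟨k, hbk, hka⟩ := exists_cycSucc_mem_arc hf.1 ha hb
    have h₁ : w a < w (cycSucc (domSet f) a) + 0 := hw.lt hfa hfsa (by omega) hadesc
    have h₂ : w (cycSucc (domSet f) a) ≤ w b + 0 := hw.le hf hfsa hfb (by omega)
    have h₃ : w b < w (cycSucc (domSet f) b) + k := hw.lt hfb hfsb hbk hbdesc
    have h₄ : w (cycSucc (domSet f) b) ≤ w a + (1 - k) := hw.le hf hfsb hfa hka
    omega
  exact fun a ha b hb => (hle b hb a ha).antisymm (hle a ha b hb)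

open scoped Classical in
/-- The winding function of a map with at most one signed descent: it steps from `0` to `1` just
after that descent. -/
noncomputable def descentStep (ε : ℤˣ) (f : PTrans) (x : ℕ) : ℤ :=
  if ∃ t ∈ signedDescents ε f, t < x then 1 else 0

theorem descentStep_nonneg (x : ℕ) : 0 ≤ descentStep ε f x := by
  rw [descentStep]
  split_ifs <;> norm_num

theorem descentStep_le_one (x : ℕ) : descentStep ε f x ≤ 1 := by
  rw [descentStep]
  split_ifs <;> norm_num

theorem descentStep_of_lt {t x : ℕ} (ht : t ∈ signedDescents ε f) (htx : t < x) :
    descentStep ε f x = 1 :=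
  if_pos ⟨t, ht, htx⟩

theorem descentStep_of_mem (h : (signedDescents ε f).Subsingleton) {t : ℕ}
    (ht : t ∈ signedDescents ε f) : descentStep ε f t = 0 :=
  if_neg fun ⟨_, hs, hst⟩ => hst.ne (h hs ht)

theorem monotone_descentStep : Monotone (descentStep ε f) := by
  intro x y hxy
  by_cases hx : ∃ t ∈ signedDescents ε f, t < x
  · obtain ⟨t, ht, htx⟩ := hx
    rw [descentStep_of_lt ht htx, descentStep_of_lt ht (htx.trans_le hxy)]
  · exact (if_neg hx).trans_le (descentStep_nonneg y)

theorem IsPT.monotoneOn_lift_descentStep (hf : IsPT n f) (h : (signedDescents ε f).Subsingleton) :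
    MonotoneOn (fun x => (ε * val f x + n * descentStep ε f x : ℤ)) (domSet f) := by
  refine monotoneOn_of_le_cycSucc fun a ha has => ?_
  by_cases hdesc : a ∈ signedDescents ε f
  · have hlt := hf.sign_mul_lt_add (apply_eq_some_val ha) (apply_eq_some_val (cycSucc_mem ha)) ε
    rw [descentStep_of_mem h hdesc, descentStep_of_lt hdesc has]
    linarith
  · have hle : (ε * val f a : ℤ) ≤ ε * val f (cycSucc (domSet f) a) :=
      not_lt.1 fun hlt => hdesc ⟨ha, hlt⟩
    gcongr
    exact monotone_descentStep has.le

theorem IsPT.lift_descentStep_le_add (hf : IsPT n f) (h : (signedDescents ε f).Subsingleton)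
    {x y : ℕ} (hx : x ∈ domSet f) (hy : y ∈ domSet f) :
    (ε * val f x + n * descentStep ε f x : ℤ) ≤ ε * val f y + n * descentStep ε f y + n := by
  have hmono := hf.monotoneOn_lift_descentStep h
  obtain ⟨m, hm, hmax⟩ := ((Set.finite_Icc 1 n).subset hf.1).exists_maximal ⟨x, hx⟩
  replace hmax : ∀ z ∈ domSet f, z ≤ m := fun z hz => (le_total z m).elim id (hmax hz)
  set s := cycSucc (domSet f) m
  have hs : s ∈ domSet f := cycSucc_mem hm
  have hwrap : (ε * val f m + n * descentStep ε f m : ℤ)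
      ≤ ε * val f s + n * descentStep ε f s + n := by
    have hns : (0 : ℤ) ≤ n * descentStep ε f s := mul_nonneg n.cast_nonneg (descentStep_nonneg s)
    by_cases hdesc : m ∈ signedDescents ε f
    · have hlt := hf.sign_mul_lt_add (apply_eq_some_val hm) (apply_eq_some_val hs) ε
      rw [descentStep_of_mem h hdesc]
      linarith
    · have hle : (ε * val f m : ℤ) ≤ ε * val f s := not_lt.1 fun hlt => hdesc ⟨hm, hlt⟩
      have hnm : (n * descentStep ε f m : ℤ) ≤ n :=
        mul_le_of_le_one_right n.cast_nonneg (descentStep_le_one m)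
      linarith
  have hxm := hmono hx hm (hmax x hx)
  have hsy := hmono hs hy (cycSucc_le_of_forall_le hmax hy)
  exact hxm.trans (hwrap.trans (add_le_add_left hsy _))

theorem IsPT.isWinding_descentStep (hf : IsPT n f) (h : (signedDescents ε f).Subsingleton) :
    IsWinding n ε f (descentStep ε f) := by
  refine hf.isWinding_of_lift_le (fun x y u v hx hy hxy => ?_) fun x y u v hx hy => ?_
  all_goals
    rw [← val_eq_of_eq_some hx, ← val_eq_of_eq_some hy]
    have hxd := mem_domSet_of_eq_some hx
    have hyd := mem_domSet_of_eq_some hy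
  · exact hf.monotoneOn_lift_descentStep h hxd hyd hxy
  · exact hf.lift_descentStep_le_add h hxd hyd

theorem IsPT.oriented_iff_exists_isWinding (hf : IsPT n f) :
    Oriented f ↔ ∃ ε w, IsWinding n ε f w := by
  rw [hf.oriented_iff_exists_subsingleton_signedDescents]
  exact ⟨fun ⟨ε, h⟩ => ⟨ε, _, hf.isWinding_descentStep h⟩,
    fun ⟨ε, _, hw⟩ => ⟨ε, hw.subsingleton_signedDescents hf⟩⟩

theorem Oriented.mul (hfo : Oriented f) (hgo : Oriented g) (hf : IsPT n f) (hg : IsPT n g) :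
    Oriented (f * g) := by
  obtain ⟨ε, w, hw⟩ := hf.oriented_iff_exists_isWinding.1 hfo
  obtain ⟨δ, z, hz⟩ := hg.oriented_iff_exists_isWinding.1 hgo
  exact (hf.mul hg).oriented_iff_exists_isWinding.2 ⟨ε * δ, _, hw.mul hz⟩

theorem OrderPres.oriented (h : OrderPres f) (hf : IsPT n f) : Oriented f := by
  refine hf.oriented_iff_exists_isWinding.2 ⟨1, 0, hf.isWinding_of_lift_le ?_ ?_⟩
  · intro x y u v hx hy hxy
    simpa using h x y u v hx hy hxy
  · intro x y u v hx hy
    simpa using (hf.sign_mul_lt_add hx hy 1).le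

/-- The images of `a`, `b`, `d` already run once around the cycle, which leaves no room for the
images of the points outside `[a, d]`. -/
theorem Oriented.eq_of_notMem_Icc (ho : Oriented f) (hf : IsPT n f) {a b d x u v s : ℕ}
    (ha : f a = some u) (hb : f b = some v) (hd : f d = some u) (hab : a ≤ b) (hbd : b ≤ d)
    (hvu : v ≠ u) (hx : f x = some s) (hxad : x ∉ Set.Icc a d) : s = u := by
  obtain ⟨ε, w, hw⟩ := hf.oriented_iff_exists_isWinding.1 ho
  have sign_mul_lt_or_gt {i j : ℕ} (hij : i ≠ j) : (ε * i : ℤ) < ε * j ∨ (ε * j : ℤ) < ε * i := by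
    rcases Int.units_eq_one_or ε with rfl | rfl <;> push_cast <;> omega
  have hturn : w a < w d := by
    have hwab : w a ≤ w b + 0 := hw.le hf ha hb (by omega)
    have hwbd : w b ≤ w d + 0 := hw.le hf hb hd (by omega)
    rcases sign_mul_lt_or_gt hvu with hlt | hlt
    · have hwab' : w a < w b + 0 := hw.lt ha hb (by omega) hlt
      omega
    · have hwbd' : w b < w d + 0 := hw.lt hb hd (by omega) hlt
      omega
  obtain ⟨k, hdx, hxa⟩ : ∃ k : ℤ, (d : ℤ) ≤ x + n * k ∧ (x : ℤ) ≤ a + n * (1 - k) := by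
    obtain ⟨hx₁, hxn⟩ := hf.mem_Icc hx
    obtain ⟨ha₁, -⟩ := hf.mem_Icc ha
    obtain ⟨-, hdn⟩ := hf.mem_Icc hd
    rcases lt_or_ge d x with hdx | hxd
    · exact ⟨0, by omega, by omega⟩
    · have hxa : x < a := not_le.1 fun hax => hxad ⟨hax, hxd⟩
      exact ⟨1, by omega, by omega⟩
  have hwdx : w d ≤ w x + k := hw.le hf hd hx hdx
  have hwxa : w x ≤ w a + (1 - k) := hw.le hf hx ha hxa
  by_contra hsu
  rcases sign_mul_lt_or_gt hsu with hlt | hlt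
  · have hwdx' : w d < w x + k := hw.lt hd hx hdx hlt
    omega
  · have hwxa' : w x < w a + (1 - k) := hw.lt hx ha hxa hlt
    omega

/-! ### The semigroup `PORD(n,r)` -/

theorem mul_mem_PORDr (hf : f ∈ PORDr n r) (hg : g ∈ PORDr n r) : f * g ∈ PORDr n r := by
  obtain ⟨⟨hfpt, hfo, hfd⟩, -⟩ := hf
  obtain ⟨⟨hgpt, hgo, hgd⟩, hgr⟩ := hg
  refine ⟨⟨hfpt.mul hgpt, hfo.mul hgo hfpt hgpt, hfd.mul hgd⟩, ?_⟩
  exact (Set.ncard_le_ncard im_mul_subset ((Set.finite_Icc 1 n).subset hgpt.2)).trans hgr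

theorem mem_PORDr_of_im_subset_Icc {a b : ℕ} (hf : f ∈ PORD n) (him : im f ⊆ Set.Icc a b)
    (hr : b + 1 ≤ a + r) : f ∈ PORDr n r := by
  refine ⟨hf, (Set.ncard_le_ncard him (Set.finite_Icc a b)).trans ?_⟩
  rw [Set.ncard_eq_toFinset_card', Set.toFinset_Icc, Nat.card_Icc]
  omega

/-! ### The set `F^r_{p,q}` -/

theorem mem_Frestr_iff (hpq : p ≤ q) :
    f ∈ Frestr n r p q ↔
      f ∈ PORDr n r ∧ (∀ x ∈ Set.Icc p q, f x = some x) ∧ f (q + 1) = some p := by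
  refine and_congr_right fun _ => ⟨fun h => ⟨fun x ⟨hpx, hxq⟩ => ?_, ?_⟩, fun ⟨hfix, hlast⟩ => ?_⟩
  · simpa [restrict, xi, hpx, hxq, hxq.trans q.le_succ] using congrFun h x
  · simpa [restrict, xi, hpq.trans q.le_succ] using congrFun h (q + 1)
  · funext x
    rcases eq_or_ne x (q + 1) with rfl | hx
    · simp [restrict, xi, hpq.trans q.le_succ, hlast]
    · have hfixx := hfix x
      simp only [restrict, xi, Set.mem_Icc] at hfixx ⊢
      grind

theorem isPT_xi (hp : 1 ≤ p) (hpq : p ≤ q) (hqn : q + 1 ≤ n) : IsPT n (xi p q) := by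
  constructor
  · intro x hx
    have hx := apply_eq_some_val hx
    simp only [xi, Set.mem_Icc] at hx ⊢
    grind
  · rintro u ⟨x, hx⟩
    simp only [xi, Set.mem_Icc] at hx ⊢
    grind

theorem orderDecr_xi (hpq : p ≤ q + 1) : OrderDecr (xi p q) := by
  intro x u hx
  simp only [xi] at hx
  grind

theorem im_xi_subset (hpq : p ≤ q) : im (xi p q) ⊆ Set.Icc p q := by
  rintro u ⟨x, hx⟩
  simp only [xi, Set.mem_Icc] at hx ⊢
  grind

theorem oriented_xi (hp : 1 ≤ p) (hpq : p ≤ q) (hqn : q + 1 ≤ n) : Oriented (xi p q) := by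
  have hf := isPT_xi hp hpq hqn
  refine hf.oriented_iff_exists_isWinding.2
    ⟨1, fun x => if x ≤ q then 0 else 1, hf.isWinding_of_lift_le ?_ ?_⟩
  all_goals
    intro x y u v hx hy
    simp only [xi] at hx hy
    push_cast
    grind

theorem xi_mem_Frestr (hp : 1 ≤ p) (hpq : p ≤ q) (hqn : q + 1 ≤ n) (hqr : q + 1 ≤ p + r) :
    xi p q ∈ Frestr n r p q := by
  have hmem : xi p q ∈ PORD n :=
    ⟨isPT_xi hp hpq hqn, oriented_xi hp hpq hqn, orderDecr_xi (by omega)⟩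
  refine (mem_Frestr_iff hpq).2
    ⟨mem_PORDr_of_im_subset_Icc hmem (im_xi_subset hpq) hqr, fun x hx => ?_, ?_⟩
  · exact if_pos hx
  · simp [xi]

theorem mem_Frestr_or_mem_Frestr_of_mul_mem (hpq : p ≤ q) (hf : f ∈ PORDr n r)
    (hg : g ∈ PORDr n r) (hfg : f * g ∈ Frestr n r p q) :
    f ∈ Frestr n r p q ∨ g ∈ Frestr n r p q := by
  obtain ⟨-, hfix, hlast⟩ := (mem_Frestr_iff hpq).1 hfg
  have hfd : OrderDecr f := hf.1.2.2
  have hgd : OrderDecr g := hg.1.2.2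
  have hfg_fix : ∀ x ∈ Set.Icc p q, f x = some x ∧ g x = some x := fun x hx =>
    hfd.fixes_of_mul_fixes hgd (hfix x hx)
  obtain ⟨y, hfy, hgy⟩ := mul_eq_some_iff.1 hlast
  rcases (hfd _ _ hfy).eq_or_lt with rfl | hyq
  · exact Or.inr ((mem_Frestr_iff hpq).2 ⟨hg, fun x hx => (hfg_fix x hx).2, hgy⟩)
  · have hgy' : g y = some y := (hfg_fix y ⟨hgd _ _ hgy, Nat.le_of_lt_succ hyq⟩).2
    obtain rfl : y = p := Option.some_injective _ (hgy'.symm.trans hgy)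
    exact Or.inl ((mem_Frestr_iff hpq).2 ⟨hf, fun x hx => (hfg_fix x hx).1, hfy⟩)

theorem eq_and_lt_of_mem_Frestr (hpq : p < q) (hf : f ∈ Frestr n r p q) {x u : ℕ}
    (hx : f x = some u) (hxpq : x ∉ Set.Icc p (q + 1)) : u = p ∧ q + 1 < x := by
  obtain ⟨⟨⟨hpt, ho, hd⟩, -⟩, hfix, hlast⟩ := (mem_Frestr_iff hpq.le).1 hf
  obtain rfl : u = p :=
    ho.eq_of_notMem_Icc hpt (hfix p ⟨le_rfl, hpq.le⟩) (hfix q ⟨hpq.le, le_rfl⟩) hlast hpq.le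
      q.le_succ hpq.ne' hx hxpq
  exact ⟨rfl, not_le.1 fun hxq => hxpq ⟨hd x u hx, hxq⟩⟩

open scoped Classical in
/-- The map fixing `[p, m]` pointwise and sending the points of `D` above `m` to `m`. Multiplying
by such maps on the left turns any element of `F^r_{p,q}` into any other one. -/
noncomputable def collapseAbove (p m : ℕ) (D : Set ℕ) : PTrans := fun x =>
  if p ≤ x ∧ x ≤ m then some x else if m < x ∧ x ∈ D then some m else none

section CollapseAbove

variable {D : Set ℕ} {x : ℕ}

theorem collapseAbove_of_mem_Icc (hx : x ∈ Set.Icc p m) : collapseAbove p m D x = some x :=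
  if_pos hx

theorem collapseAbove_of_lt (hmx : m < x) (hxD : x ∈ D) : collapseAbove p m D x = some m :=
  (if_neg fun h => h.2.not_gt hmx).trans (if_pos ⟨hmx, hxD⟩)

theorem collapseAbove_of_notMem (hx : x ∉ Set.Icc p m) (hxD : x ∉ D) :
    collapseAbove p m D x = none :=
  (if_neg hx).trans (if_neg fun h => hxD h.2)

theorem isPT_collapseAbove (hp : 1 ≤ p) (hpm : p ≤ m) (hmn : m ≤ n) (hD : D ⊆ Set.Icc 1 n) :
    IsPT n (collapseAbove p m D) := by
  constructor
  · intro x hx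
    have hxD := @hD x
    have hx := apply_eq_some_val hx
    simp only [collapseAbove, Set.mem_Icc] at hx hxD ⊢
    grind
  · rintro u ⟨x, hx⟩
    simp only [collapseAbove, Set.mem_Icc] at hx ⊢
    grind

theorem orderPres_collapseAbove : OrderPres (collapseAbove p m D) := by
  intro x y u v hx hy hxy
  simp only [collapseAbove] at hx hy
  grind

theorem orderDecr_collapseAbove : OrderDecr (collapseAbove p m D) := by
  intro x u hx
  simp only [collapseAbove] at hx
  grind

theorem im_collapseAbove_subset (hpm : p ≤ m) : im (collapseAbove p m D) ⊆ Set.Icc p m := by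
  rintro u ⟨x, hx⟩
  simp only [collapseAbove, Set.mem_Icc] at hx ⊢
  grind

theorem collapseAbove_mem_PORDr (hp : 1 ≤ p) (hpm : p ≤ m) (hmn : m ≤ n) (hmr : m + 1 ≤ p + r)
    (hD : D ⊆ Set.Icc 1 n) : collapseAbove p m D ∈ PORDr n r := by
  have hpt := isPT_collapseAbove hp hpm hmn hD
  exact mem_PORDr_of_im_subset_Icc
    ⟨hpt, orderPres_collapseAbove.oriented hpt, orderDecr_collapseAbove⟩
    (im_collapseAbove_subset hpm) hmr

theorem collapseAbove_notMem_Frestr (hpq : p ≤ q) :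
    collapseAbove p (q + 1) D ∉ Frestr n r p q := by
  intro h
  have hlast : collapseAbove p (q + 1) D (q + 1) = some p := ((mem_Frestr_iff hpq).1 h).2.2
  rw [collapseAbove_of_mem_Icc ⟨by omega, le_rfl⟩, Option.some_inj] at hlast
  omega

end CollapseAbove

theorem collapseAbove_domSet_mul (hpq : p < q) (hf : f ∈ Frestr n r p q)
    (hg : g ∈ Frestr n r p q) : collapseAbove p (q + 1) (domSet g) * f = g := by
  have hagree : ∀ x ∈ Set.Icc p (q + 1), f x = g x := fun x hx => by
    simpa [restrict, hx] using congrFun (hf.2.trans hg.2.symm) x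
  have hlast : f (q + 1) = some p := ((mem_Frestr_iff hpq.le).1 hf).2.2
  funext x
  by_cases hx : x ∈ Set.Icc p (q + 1)
  · rw [mul_apply_of_eq_some (collapseAbove_of_mem_Icc hx), hagree x hx]
  · rcases Option.eq_none_or_eq_some (g x) with hgx | ⟨u, hgx⟩
    · have hxg : x ∉ domSet g := fun h => h hgx
      rw [mul_apply, collapseAbove_of_notMem hx hxg, hgx]
      rfl
    · have hxg : x ∈ domSet g := mem_domSet_of_eq_some hgx
      obtain ⟨rfl, hqx⟩ := eq_and_lt_of_mem_Frestr hpq hg hgx hx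
      rw [mul_apply_of_eq_some (collapseAbove_of_lt hqx hxg), hlast, hgx]

end OrientedPT

open OrientedPT in
theorem maximal_minus_Frestr_general {n r p q : ℕ} (hp : 1 ≤ p) (hpq : p < q) (hqn : q + 1 ≤ n)
    (hqr : q + 2 ≤ p + r) : IsMaximalSubsemigroup (PORDr n r) (PORDr n r \ Frestr n r p q) := by
  refine isMaximalSubsemigroup_sdiff (fun f hf g hg => mul_mem_PORDr hf hg) (Set.sep_subset _ _)
    ⟨xi p q, xi_mem_Frestr hp hpq.le hqn (by omega)⟩
    (fun f hf g hg => mem_Frestr_or_mem_Frestr_of_mul_mem hpq.le hf hg) fun f hf g hg => ?_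
  have hdom : domSet g ⊆ Set.Icc 1 n := hg.1.1.1.1
  have hcollapse : collapseAbove p (q + 1) (domSet g) ∈ PORDr n r \ Frestr n r p q :=
    ⟨collapseAbove_mem_PORDr hp (by omega) hqn (by omega) hdom, collapseAbove_notMem_Frestr hpq.le⟩
  rw [← collapseAbove_domSet_mul hpq hf hg]
  exact mul_mem (Subsemigroup.subset_closure (Set.mem_insert_of_mem f hcollapse))
    (Subsemigroup.subset_closure (Set.mem_insert f _))

open OrientedPT in
/-- For `n ≥ 4`, `n − ⌊n/3⌋ ≤ r ≤ n−1`, `1 ≤ p ≤ n−2` and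
`p+1 ≤ q ≤ p+r−2 ≤ n−1`, the set `PORD(n,r) \ F^r_{p,q}` is a maximal
subsemigroup of `PORD(n,r)`. -/
theorem maximal_minus_Frestr (n r p q : ℕ) (hn : 4 ≤ n) (hr1 : n - n / 3 ≤ r)
    (hr2 : r ≤ n - 1) (hp : 1 ≤ p) (hpn : p + 2 ≤ n) (hq1 : p + 1 ≤ q)
    (hq2 : q + 2 ≤ p + r) (hq3 : p + r ≤ n + 1) :
    IsMaximalSubsemigroup (PORDr n r) (PORDr n r \ Frestr n r p q) :=
  maximal_minus_Frestr_general hp hq1 (by omega) hq2
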